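/- Let n ≥ 3 and let R ∈ S²_B(⋀²ℝ^{n+1}) be an algebraic curvature operator of Ricci type (R_W = 0) with s(R) = 1 which is not a scalar multiple of id ∧ id, and suppose Q(R) = ‖Ric(R)‖² R. Then there is an orthonormal basis of ℝ^{n+1} in which Ric₀(R) is diagonal with eigenvalue 1/(n(n+1)) of multiplicity n and eigenvalue −1/(n+1) of multiplicity 1; that is, up to the action of the orthogonal group O(n+1), R is the curvature operator of Sⁿ × ℝ with the standard product metric normalized to unit scalar curvature. -/

import Mathlib

open scoped BigOperators
open Matrix Filter

noncomputable section

/-- `so n`: the Lie algebra of real skew-symmetric `n × n` matrices, as a submodule of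
matrices.  It is the model for `⋀²ℝⁿ` under the identification `x ∧ y ↦ x yᵀ - y xᵀ`,
i.e. `(x ∧ y)(z) = ⟨y,z⟩x - ⟨x,z⟩y`. -/
def so (n : ℕ) : Submodule ℝ (Matrix (Fin n) (Fin n) ℝ) where
  carrier := {A | Aᵀ = -A}
  add_mem' := fun {a b} ha hb => by
    simp only [Set.mem_setOf_eq] at *
    rw [Matrix.transpose_add, ha, hb, neg_add]
  zero_mem' := by simp
  smul_mem' := fun c {a} ha => by
    simp only [Set.mem_setOf_eq] at *
    rw [Matrix.transpose_smul, ha, smul_neg]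

lemma mem_so {n : ℕ} {A : Matrix (Fin n) (Fin n) ℝ} : A ∈ so n ↔ Aᵀ = -A := Iff.rfl

lemma so_skew {n : ℕ} (X : so n) : (X.1)ᵀ = -X.1 := mem_so.mp X.2

lemma so_skew' {n : ℕ} (X : so n) (i j : Fin n) : X.1 j i = -X.1 i j := by
  have h := congrFun (congrFun (so_skew X) i) j
  simpa [Matrix.transpose_apply] using h

/-- The Lie bracket (matrix commutator) on `so n`. -/
def brkt {n : ℕ} (X Y : so n) : so n :=
  ⟨X.1 * Y.1 - Y.1 * X.1, by
    rw [mem_so, Matrix.transpose_sub, Matrix.transpose_mul, Matrix.transpose_mul,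
      so_skew X, so_skew Y]
    simp [neg_sub]⟩

/-- The inner product `⟨A, B⟩ = -(1/2) tr (A B)` on `so n ≅ ⋀²ℝⁿ`, for which
`{e_i ∧ e_j : i < j}` is orthonormal. -/
def ip {n : ℕ} (X Y : so n) : ℝ := -(1 / 2) * (X.1 * Y.1).trace

/-- `ip X` as a linear functional. -/
def ipL {n : ℕ} (X : so n) : so n →ₗ[ℝ] ℝ where
  toFun Y := ip X Y
  map_add' Y Z := by
    simp [ip, Matrix.mul_add, Matrix.trace_add]
    ring
  map_smul' c Y := by
    simp [ip, Matrix.mul_smul, Matrix.trace_smul]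
    ring

/-- The wedge `x ∧ y` of two vectors, as an element of `so n`. -/
def wedgeVec {n : ℕ} (x y : Fin n → ℝ) : so n :=
  ⟨Matrix.of fun i j => x i * y j - y i * x j, by
    rw [mem_so]
    ext i j
    simp [Matrix.transpose_apply]
    ring⟩

/-- Index set for the standard orthonormal basis `{e_i ∧ e_j : i < j}` of `so n`. -/
def pairs (n : ℕ) : Finset (Fin n × Fin n) := Finset.univ.filter (fun p => p.1 < p.2)

/-- Standard basis vector of `ℝⁿ`. -/
def stdVec {n : ℕ} (i : Fin n) : Fin n → ℝ := Pi.single i 1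

/-- The standard orthonormal basis element `e_i ∧ e_j` of `so n`. -/
def omegaB {n : ℕ} (p : Fin n × Fin n) : so n := wedgeVec (stdVec p.1) (stdVec p.2)

/-- Hamilton's sharp product `A # B` of self-adjoint endomorphisms of `⋀²ℝⁿ ≅ so n`:
`⟨(A # B)(φ), ψ⟩ = (1/2) Σ_{α,β} ⟨[A ω_α, B ω_β], φ⟩ ⟨[ω_α, ω_β], ψ⟩`
over the orthonormal basis `{ω_α} = {e_i ∧ e_j : i < j}`. -/
def sharp {n : ℕ} (A B : Module.End ℝ (so n)) : Module.End ℝ (so n) :=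
  (1 / 2 : ℝ) • ∑ p ∈ pairs n, ∑ q ∈ pairs n,
    (ipL (brkt (A (omegaB p)) (B (omegaB q)))).smulRight (brkt (omegaB p) (omegaB q))

/-- The bilinear map `Q(A,B) = (1/2)(AB + BA) + A # B`. -/
def Qbil {n : ℕ} (A B : Module.End ℝ (so n)) : Module.End ℝ (so n) :=
  (1 / 2 : ℝ) • (A * B + B * A) + sharp A B

/-- `Q(R) = R² + R # R`. -/
def Qop {n : ℕ} (R : Module.End ℝ (so n)) : Module.End ℝ (so n) := R * R + sharp R R

/-- Self-adjointness of an endomorphism of `so n ≅ ⋀²ℝⁿ`. -/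
def IsSelfAdjointCO {n : ℕ} (R : Module.End ℝ (so n)) : Prop :=
  ∀ X Y : so n, ip (R X) Y = ip X (R Y)

/-- The first Bianchi identity. -/
def SatBianchi {n : ℕ} (R : Module.End ℝ (so n)) : Prop :=
  ∀ x y z w : Fin n → ℝ,
    ip (R (wedgeVec x y)) (wedgeVec z w) + ip (R (wedgeVec y z)) (wedgeVec x w)
      + ip (R (wedgeVec z x)) (wedgeVec y w) = 0

/-- Algebraic curvature operators: self-adjoint endomorphisms of `⋀²ℝⁿ` satisfying the
first Bianchi identity.  `IsACO R` says `R ∈ S²_B(⋀²ℝⁿ)`. -/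
def IsACO {n : ℕ} (R : Module.End ℝ (so n)) : Prop := IsSelfAdjointCO R ∧ SatBianchi R

/-- The Ricci tensor of `R`, `Ric(R)_{ij} = Σ_k ⟨R(e_i ∧ e_k), e_j ∧ e_k⟩`. -/
def RicM {n : ℕ} (R : Module.End ℝ (so n)) : Matrix (Fin n) (Fin n) ℝ :=
  Matrix.of fun i j => ∑ k, ip (R (wedgeVec (stdVec i) (stdVec k))) (wedgeVec (stdVec j) (stdVec k))

/-- The scalar curvature `s(R) = tr Ric(R)`. -/
def scal {n : ℕ} (R : Module.End ℝ (so n)) : ℝ := (RicM R).trace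

/-- `‖Ric(R)‖² = tr (Ric(R)²)`. -/
def ricNormSq {n : ℕ} (R : Module.End ℝ (so n)) : ℝ := (RicM R * RicM R).trace

/-- The traceless Ricci tensor `Ric₀(R)`. -/
def Ric0M {n : ℕ} (R : Module.End ℝ (so n)) : Matrix (Fin n) (Fin n) ℝ :=
  RicM R - (scal R / n) • (1 : Matrix (Fin n) (Fin n) ℝ)

/-- `R` is Einstein if `Ric(R)` is a scalar multiple of the identity of `ℝⁿ`. -/
def IsEinstein {n : ℕ} (R : Module.End ℝ (so n)) : Prop :=
  ∃ c : ℝ, RicM R = c • (1 : Matrix (Fin n) (Fin n) ℝ)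

lemma wedgeEnd_key {n : ℕ} (A B : Matrix (Fin n) (Fin n) ℝ) (M : so n) :
    (A * M.1 * Bᵀ + B * M.1 * Aᵀ)ᵀ = -(A * M.1 * Bᵀ + B * M.1 * Aᵀ) := by
  have hM := so_skew M
  rw [Matrix.transpose_add, Matrix.transpose_mul, Matrix.transpose_mul,
    Matrix.transpose_mul, Matrix.transpose_mul, Matrix.transpose_transpose,
    Matrix.transpose_transpose, hM]
  simp only [Matrix.mul_neg, Matrix.neg_mul, Matrix.mul_assoc, neg_add]
  abel

/-- The wedge `A ∧ B` of two endomorphisms of `ℝⁿ`, as an endomorphism of `⋀²ℝⁿ ≅ so n`: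
`(A ∧ B)(v ∧ w) = (1/2)(Av ∧ Bw + Bv ∧ Aw)`, i.e. `M ↦ (1/2)(A M Bᵀ + B M Aᵀ)`. -/
def wedgeEnd {n : ℕ} (A B : Matrix (Fin n) (Fin n) ℝ) : Module.End ℝ (so n) where
  toFun M := ⟨(1 / 2 : ℝ) • (A * M.1 * Bᵀ + B * M.1 * Aᵀ), by
    rw [mem_so, Matrix.transpose_smul, wedgeEnd_key, smul_neg]⟩
  map_add' M N := by
    apply Subtype.ext
    simp [Matrix.mul_add, Matrix.add_mul, smul_add]
    abel
  map_smul' c M := by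
    apply Subtype.ext
    simp [Matrix.mul_smul, Matrix.smul_mul, smul_smul, mul_comm]

/-- Inner product `⟨A, B⟩ = tr(A ∘ B)` on endomorphisms of `⋀²ℝⁿ` (the Frobenius inner
product for self-adjoint operators). -/
def endIP {n : ℕ} (A B : Module.End ℝ (so n)) : ℝ := LinearMap.trace ℝ ↥(so n) (A * B)

/-- Norm of an endomorphism of `⋀²ℝⁿ` induced by `endIP`. -/
def endNorm {n : ℕ} (A : Module.End ℝ (so n)) : ℝ := Real.sqrt (endIP A A)

/-- Huisken's trilinear form `tri(A,B,C) = tr((AB + BA + 2 A#B) ∘ C) = 2⟨Q(A,B), C⟩`. -/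
def tri {n : ℕ} (A B C : Module.End ℝ (so n)) : ℝ :=
  LinearMap.trace ℝ ↥(so n) ((A * B + B * A + (2 : ℝ) • sharp A B) * C)

/-- The identity component `R_I = (s(R)/(n(n-1))) id ∧ id` of a curvature operator. -/
def compI {n : ℕ} (R : Module.End ℝ (so n)) : Module.End ℝ (so n) :=
  (scal R / ((n : ℝ) * ((n : ℝ) - 1))) • 1

/-- The traceless-Ricci component `R_{Ric₀} = (2/(n-2)) Ric₀(R) ∧ id`. -/
def compRic0 {n : ℕ} (R : Module.End ℝ (so n)) : Module.End ℝ (so n) :=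
  (2 / ((n : ℝ) - 2)) • wedgeEnd (Ric0M R) 1

/-- The Weyl component `R_W = R - R_I - R_{Ric₀}`. -/
def compW {n : ℕ} (R : Module.End ℝ (so n)) : Module.End ℝ (so n) := R - compI R - compRic0 R

/-- The derivative `DQ̃(R)` of the normalized vector field
`Q̃(R) = Q(R) - ‖Ric R‖² R` at `R`, applied to `A`:
`DQ̃(R)(A) = 2Q(R,A) - ‖Ric R‖² A - 2 tr(Ric R · Ric A) R`. -/
def DQt {n : ℕ} (R A : Module.End ℝ (so n)) : Module.End ℝ (so n) :=
  (2 : ℝ) • Qbil R A - ricNormSq R • A - (2 * (RicM R * RicM A).trace) • R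

/-!
An operator of Ricci type is `A ∧ id` with `A` symmetric, and the sharp product of `A ∧ id` with
itself is again a combination of operators `B ∧ C` with `B`, `C` polynomials in `A`. Hence if
`x`, `y` are eigenvectors of `A`, then `x ∧ y` is an eigenvector of both `R` and `Q(R)`, and
`Q(R) = μ R` becomes one quadratic equation for each pair of eigenvalues of `A`. Differences of
these equations are divisible by differences of eigenvalues, and what remains forces the spectrum
of `A` to be `-α, α, …, α` unless `A` is a multiple of the identity. The trace then fixes `α`.
-/

section Field

variable {K ι : Type*} [Field K]

lemma exists_forall_ne_eq_of_mul_eq_add {a : ι → K} {c d : K} (hc : c ≠ 0) (hc' : c + 1 ≠ 0)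
    (h : ∀ i j k, i ≠ j → i ≠ k → a j ≠ a k → c * a i = a j + a k + d)
    (ha : ∃ j k, a j ≠ a k) :
    ∃ i₀ β, a i₀ ≠ β ∧ ∀ i, i ≠ i₀ → a i = β := by
  obtain ⟨j, k, hjk⟩ := ha
  by_cases hthird : ∃ i, i ≠ j ∧ i ≠ k ∧ a i ≠ a k
  · obtain ⟨i, hij, hik, haik⟩ := hthird
    have hi := h i j k hij hik hjk
    have haij : a i = a j := by
      by_contra haij
      have hk := h k i j hik.symm (ne_of_apply_ne a hjk.symm) haij
      have : (c + 1) * (a i - a k) = 0 := by linear_combination hi - hk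
      exact haik (sub_eq_zero.mp ((mul_eq_zero.mp this).resolve_left hc'))
    refine ⟨k, a j, hjk.symm, fun l hlk => ?_⟩
    by_cases hlj : l = j
    · rw [hlj]
    · rw [← haij]
      exact mul_left_cancel₀ hc ((h l j k hlj hlk hjk).trans hi.symm)
  · push Not at hthird
    refine ⟨j, a k, hjk, fun l hlj => ?_⟩
    by_cases hlk : l = k
    · rw [hlk]
    · exact hthird l hlj hlk

variable [Fintype ι] [DecidableEq ι]

lemma sum_ite_eq_else (i₀ : ι) (x y : K) :
    ∑ i, (if i = i₀ then x else y) = x + (Fintype.card ι - 1) * y := by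
  rw [← Finset.add_sum_erase _ _ (Finset.mem_univ i₀), if_pos rfl,
    Finset.sum_congr rfl fun i hi => if_neg (Finset.ne_of_mem_erase hi), Finset.sum_const,
    Finset.card_erase_of_mem (Finset.mem_univ i₀), Finset.card_univ, nsmul_eq_mul,
    Nat.cast_pred (Fintype.card_pos_iff.mpr ⟨i₀⟩)]

theorem exists_forall_eq_ite_neg [CharZero K] (hι : 3 ≤ Fintype.card ι) {a : ι → K} {κ : K}
    (h : ∀ i j, i ≠ j → (Fintype.card ι - 2) * (a i * a j) - (a i ^ 2 + a j ^ 2)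
      + (∑ l, a l) * (a i + a j) + ∑ l, a l ^ 2 = κ * (a i + a j))
    (ha : ∃ j k, a j ≠ a k) :
    ∃ i₀ α, ∀ i, a i = if i = i₀ then -α else α := by
  have hcard₁ : (Fintype.card ι - 2 + 1 : K) ≠ 0 := by
    rw [show (Fintype.card ι - 2 + 1 : K) = Fintype.card ι - 1 by ring, sub_ne_zero]
    exact_mod_cast (by omega : Fintype.card ι ≠ 1)
  have hcard₂ : (Fintype.card ι - 2 : K) ≠ 0 := by
    rw [sub_ne_zero]
    exact_mod_cast (by omega : Fintype.card ι ≠ 2)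
  have hlin : ∀ i j k, i ≠ j → i ≠ k → a j ≠ a k →
      (Fintype.card ι - 2) * a i = a j + a k + (κ - ∑ l, a l) := by
    intro i j k hij hik hjk
    refine mul_left_cancel₀ (sub_ne_zero.mpr hjk) ?_
    linear_combination h i j hij - h i k hik
  obtain ⟨i₀, β, hne, hβ⟩ := exists_forall_ne_eq_of_mul_eq_add hcard₂ hcard₁ hlin ha
  obtain ⟨i, hi, k, hk, hik⟩ : ∃ i ∈ Finset.univ.erase i₀, ∃ k ∈ Finset.univ.erase i₀, i ≠ k := by
    rw [← Finset.one_lt_card, Finset.card_erase_of_mem (Finset.mem_univ i₀), Finset.card_univ]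
    omega
  have hi := Finset.ne_of_mem_erase hi
  have hk := Finset.ne_of_mem_erase hk
  have hform : ∀ l, a l = if l = i₀ then a i₀ else β := by
    intro l
    split_ifs with hl
    · rw [hl]
    · exact hβ l hl
  have hsum : ∑ l, a l = a i₀ + (Fintype.card ι - 1) * β := by
    rw [Finset.sum_congr rfl fun l _ => hform l, sum_ite_eq_else]
  have hsum_sq : ∑ l, a l ^ 2 = a i₀ ^ 2 + (Fintype.card ι - 1) * β ^ 2 := by
    rw [Finset.sum_congr rfl fun l _ => by rw [hform l, ite_pow], sum_ite_eq_else]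
  have hlin_i := hlin i i₀ k hi hik (by rwa [hβ k hk])
  have hquad_ik := h i k hik
  rw [hβ i hi, hβ k hk, hsum] at hlin_i hquad_ik
  have hsq : (a i₀ + β) ^ 2 = 0 := by
    linear_combination hquad_ik - 2 * β * hlin_i - hsum_sq
  have hneg : a i₀ = -β := eq_neg_of_add_eq_zero_left (pow_eq_zero_iff two_ne_zero |>.mp hsq)
  exact ⟨i₀, β, fun l => hneg ▸ hform l⟩

end Field

section Hermitian

variable {ι : Type*} [Fintype ι] [DecidableEq ι] {A : Matrix ι ι ℝ}

lemma trace_mul_self_eq_sum_sq_eigenvalues (hA : A.IsHermitian) :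
    (A * A).trace = ∑ i, hA.eigenvalues i ^ 2 := by
  conv_lhs => rw [hA.spectral_theorem, ← map_mul, Unitary.conjStarAlgAut_apply,
    trace_mul_cycle, Unitary.coe_star_mul_self, one_mul, diagonal_mul_diagonal, trace_diagonal]
  simp [sq]

lemma eq_smul_one_of_eigenvalues_eq (hA : A.IsHermitian) {c : ℝ}
    (h : ∀ i, hA.eigenvalues i = c) : A = c • 1 := by
  have hdiag : diagonal ((RCLike.ofReal : ℝ → ℝ) ∘ hA.eigenvalues) = c • (1 : Matrix ι ι ℝ) := by
    rw [smul_one_eq_diagonal]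
    exact congrArg diagonal (funext h)
  rw [hA.spectral_theorem, hdiag, map_smul, map_one]

lemma eigenvectorBasis_dotProduct (hA : A.IsHermitian) (i j : ι) :
    ⇑(hA.eigenvectorBasis i) ⬝ᵥ ⇑(hA.eigenvectorBasis j) = if i = j then 1 else 0 := by
  rw [← orthonormal_iff_ite.mp hA.eigenvectorBasis.orthonormal i j,
    EuclideanSpace.inner_eq_star_dotProduct, star_trivial, dotProduct_comm]

end Hermitian

section CurvatureOperator

variable {n : ℕ}

lemma sum_pairs_eq_half_smul_sum_sum {M : Type*} [AddCommGroup M] [Module ℝ M]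
    {f : Fin n × Fin n → M} (hswap : ∀ i j, f (i, j) = f (j, i)) (hdiag : ∀ i, f (i, i) = 0) :
    ∑ p ∈ pairs n, f p = (1 / 2 : ℝ) • ∑ i, ∑ j, f (i, j) := by
  have hsplit : ∀ i j, f (i, j) = (if i < j then f (i, j) else 0)
      + if j < i then f (j, i) else 0 := by
    intro i j
    rcases lt_trichotomy i j with hij | rfl | hij
    · simp [hij, hij.not_gt]
    · simp [hdiag]
    · simp [hij, hij.not_gt, hswap i j]
  have hlt : ∑ i, ∑ j, (if i < j then f (i, j) else 0) = ∑ p ∈ pairs n, f p := by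
    rw [pairs, Finset.sum_filter, Fintype.sum_prod_type]
  have hgt : ∑ i, ∑ j, (if j < i then f (j, i) else 0) = ∑ p ∈ pairs n, f p := by
    rw [Finset.sum_comm, hlt]
  have hfull : ∑ i, ∑ j, f (i, j) = ∑ p ∈ pairs n, f p + ∑ p ∈ pairs n, f p := by
    rw [Finset.sum_congr rfl fun i _ => Finset.sum_congr rfl fun j _ => hsplit i j]
    simp only [Finset.sum_add_distrib, hlt, hgt]
  rw [hfull]
  module

lemma coe_omegaB (i j : Fin n) : (omegaB (i, j)).1 = single i j 1 - single j i 1 := by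
  simp only [single_eq_single_vecMulVec_single]
  rfl

lemma coe_wedgeVec (x y : Fin n → ℝ) :
    (wedgeVec x y).1 = vecMulVec x y - vecMulVec y x := rfl

lemma trace_coe_so (X : so n) : X.1.trace = 0 := by
  have h := trace_transpose X.1
  rw [so_skew, trace_neg] at h
  linarith

lemma wedgeVec_ne_zero {x y : Fin n → ℝ} (hx : x ⬝ᵥ x = 1) (hy : y ⬝ᵥ y = 1)
    (hxy : x ⬝ᵥ y = 0) : wedgeVec x y ≠ 0 := by
  intro h
  have happly := congrArg (fun X : so n => X.1 *ᵥ y) h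
  simp only [coe_wedgeVec, sub_mulVec, vecMulVec_mulVec, op_smul_eq_smul, hy, hxy, one_smul,
    zero_smul, sub_zero, ZeroMemClass.coe_zero, zero_mulVec] at happly
  simp [happly] at hx

/-! ### The sharp product -/

lemma sum_omegaB_mul_mul_omegaB (M : Matrix (Fin n) (Fin n) ℝ) :
    ∑ p ∈ pairs n, (omegaB p).1 * M * (omegaB p).1 = Mᵀ - M.trace • 1 := by
  rw [sum_pairs_eq_half_smul_sum_sum (fun i j => by simp only [coe_omegaB]; noncomm_ring)
    (fun i => by simp [coe_omegaB])]
  have hprod (i j : Fin n) : (omegaB (i, j)).1 * M * (omegaB (i, j)).1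
      = single i j (M j i) - single i i (M j j) - single j j (M i i) + single j i (M i j) := by
    simp only [coe_omegaB, sub_mul, mul_sub, single_mul_mul_single, one_mul, mul_one]
    abel
  have htranspose : ∑ i, ∑ j, single i j (M j i) = Mᵀ := (matrix_eq_sum_single Mᵀ).symm
  have htrace : ∑ i, ∑ j, single i i (M j j) = M.trace • (1 : Matrix (Fin n) (Fin n) ℝ) := by
    rw [smul_one_eq_diagonal, ← sum_single_eq_diagonal]
    exact Finset.sum_congr rfl fun i _ => (map_sum (singleAddMonoidHom (α := ℝ) i i) _ _).symm
  simp only [hprod, Finset.sum_add_distrib, Finset.sum_sub_distrib, htranspose, htrace]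
  rw [Finset.sum_comm, htrace, Finset.sum_comm, htranspose]
  module

lemma ip_omegaB (i j : Fin n) (Y : so n) : ip (omegaB (i, j)) Y = Y.1 i j := by
  rw [ip, coe_omegaB, sub_mul, trace_sub, trace_single_mul, trace_single_mul, so_skew' Y i j]
  simp only [smul_eq_mul]
  ring

lemma sum_ip_omegaB_smul (Y : so n) : ∑ p ∈ pairs n, ip (omegaB p) Y • omegaB p = Y := by
  apply Subtype.ext
  simp only [Submodule.coe_sum, Submodule.coe_smul]
  rw [sum_pairs_eq_half_smul_sum_sum
    (fun i j => by simp only [ip_omegaB, coe_omegaB, so_skew' Y i j]; module)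
    (fun i => by simp [coe_omegaB])]
  have hsum : ∑ i, ∑ j, single i j (Y.1 i j) = Y.1 := (matrix_eq_sum_single Y.1).symm
  have hsum_swap : ∑ i, ∑ j, single j i (Y.1 i j) = Y.1ᵀ := by
    rw [Finset.sum_comm]
    exact (matrix_eq_sum_single Y.1ᵀ).symm
  simp only [ip_omegaB, coe_omegaB, smul_sub, smul_single, smul_eq_mul, mul_one,
    Finset.sum_sub_distrib, hsum, hsum_swap, so_skew]
  module

lemma ip_brkt_left (U V X : so n) : ip (brkt U V) X = ip U (brkt V X) := by
  simp only [ip, brkt, sub_mul, mul_sub, trace_sub]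
  rw [mul_assoc U.1, mul_assoc V.1, trace_mul_comm V.1, mul_assoc U.1]

/-- The linear map `U ↦ [U, V]`, used to move sums and scalars through the bracket. -/
def brktRight (V : so n) : so n →ₗ[ℝ] so n where
  toFun U := brkt U V
  map_add' U U' := by
    apply Subtype.ext
    simp only [brkt, Submodule.coe_add]
    noncomm_ring
  map_smul' c U := by
    apply Subtype.ext
    simp [brkt, smul_sub]

lemma sharp_apply_of_isSelfAdjointCO {A : Module.End ℝ (so n)} (hA : IsSelfAdjointCO A)
    (B : Module.End ℝ (so n)) (X : so n) :
    sharp A B X = (1 / 2 : ℝ) • ∑ q ∈ pairs n, brkt (A (brkt (B (omegaB q)) X)) (omegaB q) := by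
  have hterm : ∀ p q, ip (brkt (A (omegaB p)) (B (omegaB q))) X • brkt (omegaB p) (omegaB q)
      = brktRight (omegaB q) (ip (omegaB p) (A (brkt (B (omegaB q)) X)) • omegaB p) := by
    intro p q
    rw [ip_brkt_left, hA, map_smul]
    rfl
  calc sharp A B X
      = (1 / 2 : ℝ) • ∑ p ∈ pairs n, ∑ q ∈ pairs n,
          ip (brkt (A (omegaB p)) (B (omegaB q))) X • brkt (omegaB p) (omegaB q) := by
        simp only [sharp, LinearMap.smul_apply, LinearMap.sum_apply]
        rfl
    _ = (1 / 2 : ℝ) • ∑ q ∈ pairs n, brkt (A (brkt (B (omegaB q)) X)) (omegaB q) := by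
        simp only [hterm]
        rw [Finset.sum_comm]
        simp only [← map_sum, sum_ip_omegaB_smul]
        rfl

lemma coe_brkt_eq_sub_transpose (U V : so n) : (brkt U V).1 = U.1 * V.1 - (U.1 * V.1)ᵀ := by
  rw [transpose_mul, so_skew, so_skew, neg_mul_neg]
  rfl

/-! ### Curvature operators of the form `A ∧ id` -/

variable {A B : Matrix (Fin n) (Fin n) ℝ}

lemma coe_wedgeEnd (A B : Matrix (Fin n) (Fin n) ℝ) (X : so n) :
    (wedgeEnd A B X).1 = (1 / 2 : ℝ) • (A * X.1 * Bᵀ + B * X.1 * Aᵀ) := rfl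

lemma wedgeEnd_smul_left (c : ℝ) (A B : Matrix (Fin n) (Fin n) ℝ) :
    wedgeEnd (c • A) B = c • wedgeEnd A B := by
  ext1 X
  apply Subtype.ext
  simp [coe_wedgeEnd, smul_comm c]

lemma wedgeEnd_add_left (A A' B : Matrix (Fin n) (Fin n) ℝ) :
    wedgeEnd (A + A') B = wedgeEnd A B + wedgeEnd A' B := by
  ext1 X
  apply Subtype.ext
  simp only [coe_wedgeEnd, LinearMap.add_apply, Submodule.coe_add,
    transpose_add, add_mul, Matrix.mul_add]
  module

lemma wedgeEnd_one_one : wedgeEnd (1 : Matrix (Fin n) (Fin n) ℝ) 1 = 1 := by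
  ext1 X
  apply Subtype.ext
  simp only [coe_wedgeEnd, transpose_one, one_mul, mul_one,
    Module.End.one_apply]
  module

lemma wedgeEnd_wedgeVec (A B : Matrix (Fin n) (Fin n) ℝ) (x y : Fin n → ℝ) :
    wedgeEnd A B (wedgeVec x y)
      = (1 / 2 : ℝ) • (wedgeVec (A *ᵥ x) (B *ᵥ y) + wedgeVec (B *ᵥ x) (A *ᵥ y)) := by
  apply Subtype.ext
  simp only [coe_wedgeEnd, coe_wedgeVec, Submodule.coe_smul,
    Submodule.coe_add, mul_sub, sub_mul, mul_vecMulVec, vecMulVec_mul, vecMul_transpose]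
  module

lemma coe_wedgeEnd_one_apply (hA : A.IsSymm) (X : so n) :
    (wedgeEnd A 1 X).1 = (1 / 2 : ℝ) • (A * X.1 + X.1 * A) := by
  simp [coe_wedgeEnd, hA.eq]

lemma isSelfAdjointCO_wedgeEnd (hA : A.IsSymm) (hB : B.IsSymm) :
    IsSelfAdjointCO (wedgeEnd A B) := by
  intro X Y
  have hcycle (C D : Matrix (Fin n) (Fin n) ℝ) :
      (C * X.1 * D * Y.1).trace = (X.1 * (D * Y.1 * C)).trace := by
    rw [mul_assoc, mul_assoc, trace_mul_comm]
    simp only [mul_assoc]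
  simp only [ip, coe_wedgeEnd, hA.eq, hB.eq, Matrix.smul_mul, Matrix.mul_smul, trace_smul,
    add_mul, Matrix.mul_add, trace_add, hcycle]
  rw [add_comm]

lemma trace_mul_coe_so (hA : A.IsSymm) (X : so n) : (A * X.1).trace = 0 := by
  have h := trace_coe_so (wedgeEnd A 1 X)
  rw [coe_wedgeEnd_one_apply hA, trace_smul, trace_add, trace_mul_comm X.1, smul_eq_mul] at h
  linarith

lemma sum_wedgeEnd_brkt_wedgeEnd_mul_omegaB (hA : A.IsSymm) (X : so n) :
    ∑ q ∈ pairs n, (wedgeEnd A 1 (brkt (wedgeEnd A 1 (omegaB q)) X)).1 * (omegaB q).1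
      = (-(wedgeEnd (A * A) 1) + (((n : ℝ) - 4) / 4) • wedgeEnd A A
        + (A.trace / 2) • wedgeEnd A 1 + ((A * A).trace / 4) • 1 : Module.End ℝ (so n)) X := by
  have hAA : (A * A).IsSymm := by simp [IsSymm, hA.eq]
  have hexpand : ∀ q, (wedgeEnd A 1 (brkt (wedgeEnd A 1 (omegaB q)) X)).1 * (omegaB q).1
      = (1 / 4 : ℝ) • (A * A * ((omegaB q).1 * X.1 * (omegaB q).1)
        + A * ((omegaB q).1 * (A * X.1) * (omegaB q).1)
        - A * X.1 * A * ((omegaB q).1 * 1 * (omegaB q).1)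
        - A * X.1 * ((omegaB q).1 * A * (omegaB q).1)
        + A * ((omegaB q).1 * (X.1 * A) * (omegaB q).1)
        + (omegaB q).1 * (A * X.1 * A) * (omegaB q).1
        - X.1 * A * ((omegaB q).1 * A * (omegaB q).1)
        - X.1 * ((omegaB q).1 * (A * A) * (omegaB q).1)) := by
    intro q
    simp only [coe_wedgeEnd_one_apply hA, brkt, Matrix.mul_smul, Matrix.smul_mul, ← smul_sub,
      Matrix.mul_add, add_mul, mul_sub, sub_mul, mul_one, mul_assoc]
    module
  have hAX : (A * X.1).trace = 0 := trace_mul_coe_so hA X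
  have hXA : (X.1 * A).trace = 0 := by rw [trace_mul_comm, hAX]
  have hAXA : (A * X.1 * A).trace = 0 := by
    rw [trace_mul_cycle, trace_mul_coe_so hAA]
  simp only [hexpand, ← Finset.smul_sum, Finset.sum_add_distrib, Finset.sum_sub_distrib,
    ← Finset.mul_sum, sum_omegaB_mul_mul_omegaB, trace_coe_so, hAX, hXA, hAXA, transpose_mul,
    hA.eq, so_skew, transpose_one, trace_one, Fintype.card_fin]
  simp only [LinearMap.add_apply, LinearMap.neg_apply, LinearMap.smul_apply,
    Module.End.one_apply, Submodule.coe_add, Submodule.coe_neg, Submodule.coe_smul,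
    coe_wedgeEnd, hA.eq, hAA.eq, transpose_one, one_mul, mul_sub, zero_smul, sub_zero, mul_neg,
    neg_mul, mul_one, Matrix.mul_smul, mul_assoc]
  module

lemma sharp_wedgeEnd_one (hA : A.IsSymm) :
    sharp (wedgeEnd A 1) (wedgeEnd A 1) = -(wedgeEnd (A * A) 1)
      + (((n : ℝ) - 4) / 4) • wedgeEnd A A + (A.trace / 2) • wedgeEnd A 1
      + ((A * A).trace / 4) • 1 := by
  ext1 X
  apply Subtype.ext
  rw [sharp_apply_of_isSelfAdjointCO (isSelfAdjointCO_wedgeEnd hA isSymm_one), Submodule.coe_smul,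
    Submodule.coe_sum]
  simp only [coe_brkt_eq_sub_transpose]
  rw [Finset.sum_sub_distrib, ← transpose_sum, sum_wedgeEnd_brkt_wedgeEnd_mul_omegaB hA, so_skew]
  module

lemma wedgeEnd_one_mul_self (hA : A.IsSymm) :
    wedgeEnd A 1 * wedgeEnd A 1
      = (1 / 2 : ℝ) • (wedgeEnd (A * A) 1 + wedgeEnd A A) := by
  have hAA : (A * A).IsSymm := by simp [IsSymm, hA.eq]
  ext1 X
  apply Subtype.ext
  simp only [Module.End.mul_apply, LinearMap.smul_apply, LinearMap.add_apply, Submodule.coe_smul,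
    Submodule.coe_add, coe_wedgeEnd, hA.eq, hAA.eq, transpose_one, one_mul, mul_one,
    Matrix.mul_smul, Matrix.smul_mul, Matrix.mul_add, add_mul, mul_assoc]
  module

theorem Qop_wedgeEnd_one (hA : A.IsSymm) :
    Qop (wedgeEnd A 1) = -(1 / 2 : ℝ) • wedgeEnd (A * A) 1 + (((n : ℝ) - 2) / 4) • wedgeEnd A A
      + (A.trace / 2) • wedgeEnd A 1 + ((A * A).trace / 4) • 1 := by
  rw [Qop, wedgeEnd_one_mul_self hA, sharp_wedgeEnd_one hA]
  module

lemma quadratic_eq_of_Qop_wedgeEnd_one_eq_smul (hA : A.IsSymm) {μ : ℝ}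
    (hQ : Qop (wedgeEnd A 1) = μ • wedgeEnd A 1) {x y : Fin n → ℝ} {a b : ℝ}
    (hxy : wedgeVec x y ≠ 0) (hx : A *ᵥ x = a • x) (hy : A *ᵥ y = b • y) :
    ((n : ℝ) - 2) * (a * b) - (a ^ 2 + b ^ 2) + A.trace * (a + b) + (A * A).trace
      = 2 * μ * (a + b) := by
  have hsmul (c d : ℝ) : wedgeVec (c • x) (d • y) = (c * d) • wedgeVec x y := by
    apply Subtype.ext
    simp only [coe_wedgeVec, Submodule.coe_smul, smul_vecMulVec, vecMulVec_smul]
    module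
  have hsmul_left (c : ℝ) := by simpa using hsmul c 1
  have hsmul_right (d : ℝ) := by simpa using hsmul 1 d
  have h := LinearMap.congr_fun hQ (wedgeVec x y)
  simp only [Qop_wedgeEnd_one hA, LinearMap.add_apply, LinearMap.smul_apply,
    Module.End.one_apply, wedgeEnd_wedgeVec, ← mulVec_mulVec, one_mulVec, hx, hy, mulVec_smul,
    smul_smul, hsmul, hsmul_left, hsmul_right, ← add_smul] at h
  have hcoeff := smul_left_injective ℝ hxy h
  linear_combination 4 * hcoeff

theorem exists_eigenvalues_eq_ite_neg (hn : 3 ≤ n) (hA : A.IsHermitian) {μ : ℝ}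
    (hQ : Qop (wedgeEnd A 1) = μ • wedgeEnd A 1) (hA' : ¬ ∃ c : ℝ, A = c • 1) :
    ∃ i₀ α, ∀ i, hA.eigenvalues i = if i = i₀ then -α else α := by
  refine exists_forall_eq_ite_neg (κ := 2 * μ) (by simpa using hn) (fun i j hij => ?_) ?_
  · have hwedge : wedgeVec (hA.eigenvectorBasis i) (hA.eigenvectorBasis j) ≠ 0 :=
      wedgeVec_ne_zero (by simp [eigenvectorBasis_dotProduct])
        (by simp [eigenvectorBasis_dotProduct]) (by simp [eigenvectorBasis_dotProduct, hij])
    have hquad := quadratic_eq_of_Qop_wedgeEnd_one_eq_smul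
      ((conjTranspose_eq_transpose_of_trivial A).symm.trans hA) hQ hwedge
      (hA.mulVec_eigenvectorBasis i) (hA.mulVec_eigenvectorBasis j)
    simpa [hA.trace_eq_sum_eigenvalues, trace_mul_self_eq_sum_sq_eigenvalues hA] using hquad
  · by_contra! hconst
    exact hA' ⟨_, eq_smul_one_of_eigenvalues_eq hA fun i => hconst i ⟨0, by omega⟩⟩

theorem exists_eigenvalues_eq_ite_trace (hn : 3 ≤ n) (hA : A.IsHermitian) {μ : ℝ}
    (hQ : Qop (wedgeEnd A 1) = μ • wedgeEnd A 1) (hA' : ¬ ∃ c : ℝ, A = c • 1) :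
    ∃ i₀, ∀ i, hA.eigenvalues i
      = if i = i₀ then -(A.trace / ((n : ℝ) - 2)) else A.trace / ((n : ℝ) - 2) := by
  obtain ⟨i₀, α, hα⟩ := exists_eigenvalues_eq_ite_neg hn hA hQ hA'
  have htrace := hA.trace_eq_sum_eigenvalues
  simp only [hα, RCLike.ofReal_real_eq_id, id, sum_ite_eq_else, Fintype.card_fin] at htrace
  have hn₂ : (n : ℝ) - 2 ≠ 0 := sub_ne_zero.mpr (by exact_mod_cast (by omega : n ≠ 2))
  have hαtrace : α = A.trace / ((n : ℝ) - 2) := by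
    rw [eq_div_iff hn₂]
    linear_combination -htrace
  exact ⟨i₀, hαtrace ▸ hα⟩

/-! ### Ricci-type curvature operators -/

lemma isSymm_RicM {R : Module.End ℝ (so n)} (hR : IsSelfAdjointCO R) : (RicM R).IsSymm := by
  ext i j
  simp only [RicM, transpose_apply, of_apply]
  refine Finset.sum_congr rfl fun k _ => ?_
  rw [hR, ip, ip, trace_mul_comm]

lemma isSymm_Ric0M {R : Module.End ℝ (so n)} (hR : IsSelfAdjointCO R) : (Ric0M R).IsSymm := by
  simp [Ric0M, IsSymm, (isSymm_RicM hR).eq]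

lemma trace_Ric0M [NeZero n] (R : Module.End ℝ (so n)) : (Ric0M R).trace = 0 := by
  simp [Ric0M, trace_sub, scal, NeZero.ne]

/-- Twice the Schouten tensor, normalized so that an operator `R` of Ricci type equals
`doubleSchouten R ∧ id`. -/
def doubleSchouten (R : Module.End ℝ (so n)) : Matrix (Fin n) (Fin n) ℝ :=
  (scal R / ((n : ℝ) * ((n : ℝ) - 1))) • 1 + (2 / ((n : ℝ) - 2)) • Ric0M R

lemma isHermitian_doubleSchouten {R : Module.End ℝ (so n)} (hR : IsSelfAdjointCO R) :
    (doubleSchouten R).IsHermitian := by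
  simp [doubleSchouten, IsHermitian, conjTranspose_eq_transpose_of_trivial, (isSymm_Ric0M hR).eq]

lemma trace_doubleSchouten [NeZero n] (R : Module.End ℝ (so n)) :
    (doubleSchouten R).trace = scal R / ((n : ℝ) - 1) := by
  have hn : (n : ℝ) ≠ 0 := NeZero.ne _
  simp only [doubleSchouten, trace_add, trace_smul, trace_one, Fintype.card_fin, trace_Ric0M,
    smul_eq_mul, mul_zero, add_zero]
  field_simp

lemma Ric0M_eq_doubleSchouten (hn : n ≠ 2) (R : Module.End ℝ (so n)) :
    Ric0M R = (((n : ℝ) - 2) / 2) •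
      (doubleSchouten R - (scal R / ((n : ℝ) * ((n : ℝ) - 1))) • 1) := by
  have hn' : (n : ℝ) - 2 ≠ 0 := sub_ne_zero.mpr (by exact_mod_cast hn)
  rw [doubleSchouten, add_sub_cancel_left, smul_smul,
    div_mul_div_cancel₀ two_ne_zero, div_self hn', one_smul]

lemma eq_wedgeEnd_doubleSchouten {R : Module.End ℝ (so n)} (hR : compW R = 0) :
    R = wedgeEnd (doubleSchouten R) 1 := by
  rw [doubleSchouten, wedgeEnd_add_left, wedgeEnd_smul_left, wedgeEnd_smul_left, wedgeEnd_one_one]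
  exact sub_eq_zero.mp ((sub_sub R (compI R) (compRic0 R)).symm.trans hR)

end CurvatureOperator

theorem stmt2_general (n : ℕ) (hn : 2 ≤ n) (R : Module.End ℝ (so (n + 1)))
    (hR : IsSelfAdjointCO R) (hRicciType : compW R = 0)
    (hnotI : ¬ ∃ c : ℝ, R = c • (1 : Module.End ℝ (so (n + 1))))
    (μ : ℝ) (hQ : Qop R = μ • R) :
    ∃ (v : Fin (n + 1) → (Fin (n + 1) → ℝ)) (i₀ : Fin (n + 1)),
      (∀ i j : Fin (n + 1), v i ⬝ᵥ v j = if i = j then (1 : ℝ) else 0) ∧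
      (∀ i : Fin (n + 1), (Ric0M R).mulVec (v i) =
        (if i = i₀ then -(scal R / ((n : ℝ) + 1))
          else scal R / ((n : ℝ) * ((n : ℝ) + 1))) • v i) := by
  have hRA := eq_wedgeEnd_doubleSchouten hRicciType
  have hA := isHermitian_doubleSchouten hR
  have hA' : ¬ ∃ c : ℝ, doubleSchouten R = c • 1 := fun ⟨c, hc⟩ =>
    hnotI ⟨c, by rw [hRA, hc, wedgeEnd_smul_left, wedgeEnd_one_one]⟩
  obtain ⟨i₀, hi₀⟩ := exists_eigenvalues_eq_ite_trace (by omega) hA (hRA ▸ hQ) hA'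
  refine ⟨fun i => hA.eigenvectorBasis i, i₀, eigenvectorBasis_dotProduct hA, fun i => ?_⟩
  rw [Ric0M_eq_doubleSchouten (by omega), smul_mulVec, sub_mulVec, hA.mulVec_eigenvectorBasis,
    smul_mulVec, one_mulVec, ← sub_smul, smul_smul, hi₀, trace_doubleSchouten]
  congr 1
  have hn₀ : (n : ℝ) ≠ 0 := by positivity
  have hn₁ : (n : ℝ) - 1 ≠ 0 := sub_ne_zero.mpr (by exact_mod_cast (by omega : n ≠ 1))
  have hsub : (n : ℝ) + 1 - 2 = n - 1 := by ring
  simp only [Nat.cast_add_one, add_sub_cancel_right, hsub]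
  split_ifs <;> field_simp <;> ring

/-- For `n ≥ 3`, if `R ∈ S²_B(⋀²ℝ^{n+1})` is of Ricci type
(`R_W = 0`), has unit scalar curvature, is not a multiple of `id ∧ id`, and satisfies
`Q(R) = ‖Ric(R)‖² R`, then there is an orthonormal basis of `ℝ^{n+1}` diagonalizing
`Ric₀(R)` with eigenvalue `1/(n(n+1))` of multiplicity `n` and `-1/(n+1)` of
multiplicity `1`: up to `O(n+1)`, `R` is the curvature operator of `Sⁿ × ℝ` with the
standard product metric normalized to unit scalar curvature. -/
theorem stmt2 (n : ℕ) (hn : 3 ≤ n) (R : Module.End ℝ (so (n + 1)))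
    (hACO : IsACO R)
    (hRicciType : compW R = 0)
    (hscal : scal R = 1)
    (hnotI : ¬ ∃ c : ℝ, R = c • (1 : Module.End ℝ (so (n + 1))))
    (hQ : Qop R = ricNormSq R • R) :
    ∃ (v : Fin (n + 1) → (Fin (n + 1) → ℝ)) (i₀ : Fin (n + 1)),
      (∀ i j : Fin (n + 1), v i ⬝ᵥ v j = if i = j then (1 : ℝ) else 0) ∧
      (∀ i : Fin (n + 1),
        (Ric0M R).mulVec (v i) =
          (if i = i₀ then -(1 / ((n : ℝ) + 1)) else 1 / ((n : ℝ) * ((n : ℝ) + 1))) • v i) := by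
  simpa only [hscal] using
    stmt2_general n (by omega) R hACO.1 hRicciType hnotI (ricNormSq R) hQ

end
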